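/- Let L be a Lie ring (or a Lie algebra over a commutative ring) and let T, V ∈ L satisfy ⁅V, ⁅V, ⁅T, V⁆⁆⁆ = 0. Then ⁅V, ⁅V, ⁅T, ⁅T, ⁅T, V⁆⁆⁆⁆⁆ = −3·⁅⁅T,V⁆, ⁅T, ⁅V, ⁅T,V⁆⁆⁆⁆. -/

import Mathlib

/-- The relation `[X₂, X₁₃] = -3X₁₇` in the paper's Philip Hall basis with generators
`X₁ = T`, `X₂ = V`: if `⁅V, ⁅V, ⁅T, V⁆⁆⁆ = 0` (as holds for the Lie operators of a
Hamiltonian with kinetic energy quadratic in the momenta), then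
`⁅V, ⁅V, ⁅T, ⁅T, ⁅T, V⁆⁆⁆⁆⁆ = -3⁅⁅T,V⁆, ⁅T, ⁅V, ⁅T,V⁆⁆⁆⁆`. -/
theorem hall_relation_X2_X13
    {L : Type*} [LieRing L] (T V : L)
    (hVVTV : ⁅V, ⁅V, ⁅T, V⁆⁆⁆ = 0) :
    ⁅V, ⁅V, ⁅T, ⁅T, ⁅T, V⁆⁆⁆⁆⁆ = -(3 • ⁅⁅T, V⁆, ⁅T, ⁅V, ⁅T, V⁆⁆⁆⁆) := by
  have hVT : ⁅V, T⁆ = -⁅T, V⁆ := (lie_skew V T).symm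
  generalize hA : ⁅T, V⁆ = A at *
  generalize hB : ⁅V, A⁆ = B at *
  generalize hC : ⁅T, A⁆ = C at *
  generalize hE : ⁅T, B⁆ = E at *
  have hVC : ⁅V, C⁆ = E := by
    rw [← hC, leibniz_lie, hVT, hB, hE, neg_lie, lie_self, neg_zero, zero_add]
  have hVE : ⁅V, E⁆ = -⁅A, B⁆ := by
    rw [← hE, leibniz_lie, hVT, hVVTV, lie_zero, add_zero, neg_lie]
  have hVD : ⁅V, ⁅T, C⁆⁆ = -⁅A, C⁆ + ⁅T, E⁆ := by
    rw [leibniz_lie, hVT, hVC, neg_lie]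
  have hCB : ⁅C, B⁆ = -⁅B, C⁆ := (lie_skew C B).symm
  rw [hVD, lie_add, lie_neg, leibniz_lie V A C, leibniz_lie V T E, hB, hVC, hVT, hVE,
    lie_neg, leibniz_lie T A B, hC, hE, hCB, neg_lie]
  abel
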